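/- Let n and k be integers with n ≥ k ≥ 4, and assume that n ≥ 5 or k ≥ 5. Let 𝓡_k be the family of all non-transitive tournaments on k vertices. Then D(n, 𝓡_k) = 2^{t_{k-1}(n)}, and the Turán graph T_{k-1}(n) is the unique n-vertex 𝓡_k-extremal graph; equivalently, the maximum number of orientations of an n-vertex graph in which every copy of K_k is transitively oriented equals 2^{t_{k-1}(n)}, attained only by T_{k-1}(n). -/

import Mathlib

open scoped Classical

noncomputable section

universe u

variable {V : Type u}

/-- An orientation of a simple graph `G`: a relation choosing exactly one
direction for each edge of `G`. -/
abbrev SimpleGraph.Orient (G : SimpleGraph V) : Type u :=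
  {D : V → V → Prop // (∀ u v, D u v → G.Adj u v) ∧ ∀ u v, G.Adj u v → (D u v ↔ ¬ D v u)}

/-- A family of tournaments: for each `k`, a set of orientations of the
complete graph on `k` vertices. -/
abbrev TournFamily : Type :=
  ∀ k : ℕ, Set ((⊤ : SimpleGraph (Fin k)).Orient)

/-- The orientation `D` of `G` contains a copy of the `k`-vertex tournament `T`. -/
def ContainsCopy {G : SimpleGraph V} (D : G.Orient) {k : ℕ}
    (T : (⊤ : SimpleGraph (Fin k)).Orient) : Prop :=
  ∃ φ : Fin k → V, Function.Injective φ ∧ ∀ i j, T.1 i j → D.1 (φ i) (φ j)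

/-- The orientation `D` is `F`-free: it contains no copy of a member of `F`. -/
def FreeOrient {G : SimpleGraph V} (F : TournFamily) (D : G.Orient) : Prop :=
  ∀ (k : ℕ) (T : (⊤ : SimpleGraph (Fin k)).Orient), T ∈ F k → ¬ ContainsCopy D T

/-- `D(G, F)`: the number of `F`-free orientations of the graph `G`. -/
def numOrient (G : SimpleGraph V) (F : TournFamily) : ℕ :=
  Nat.card {D : G.Orient // FreeOrient F D}

/-- `D(n, F)`: the maximum of `D(G, F)` over all `n`-vertex graphs `G`. -/
def maxOrient (n : ℕ) (F : TournFamily) : ℕ :=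
  sSup (Set.range fun G : SimpleGraph (Fin n) => numOrient G F)

/-- A tournament is strongly connected if there is a directed path between
every ordered pair of vertices. -/
def IsStrongTourn {k : ℕ} (T : (⊤ : SimpleGraph (Fin k)).Orient) : Prop :=
  ∀ u v : Fin k, Relation.ReflTransGen T.1 u v

/-- `𝓢 k`: the family of strongly connected tournaments on `k` vertices. -/
def SFam (k : ℕ) : TournFamily := fun m => {T | m = k ∧ IsStrongTourn T}

/-- `t r n`: the number of edges of the `r`-partite Turán graph on `n` vertices. -/
def turanNum (r n : ℕ) : ℕ := (SimpleGraph.turanGraph n r).edgeFinset.card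

/-- `𝓡 k`: the family of non-transitive tournaments on `k` vertices. -/
def RFam (k : ℕ) : TournFamily := fun m => {T | m = k ∧ ¬ Transitive T.1}

open SimpleGraph Finset

/-! ### Counting all orientations -/

/-- Relative to a linear order of the vertices, an orientation amounts to a choice of a truth value
for each edge. -/
def orientEquivEdgeFun [LinearOrder V] (G : SimpleGraph V) :
    G.Orient ≃ (G.edgeSet → Prop) where
  toFun D e := D.1 e.1.inf e.1.sup
  invFun f := ⟨fun u v => ∃ h : G.Adj u v,
      (u < v ∧ f ⟨s(u, v), h⟩) ∨ (v < u ∧ ¬ f ⟨s(u, v), h⟩), by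
    refine ⟨fun u v h => h.1, fun u v h => ?_⟩
    have hs : (⟨s(v, u), h.symm⟩ : G.edgeSet) = ⟨s(u, v), h⟩ := Subtype.ext Sym2.eq_swap
    have h' := h.symm
    simp only [h, h', exists_true_left, hs]
    rcases lt_or_gt_of_ne h.ne with hlt | hlt <;> simp [hlt, hlt.not_gt]⟩
  left_inv D := by
    ext u v
    constructor
    · rintro ⟨h, ⟨hlt, hD⟩ | ⟨hlt, hD⟩⟩
      · simpa [hlt.le] using hD
      · rw [D.2.2 u v h]
        simpa [hlt.le] using hD
    · intro hD
      have h := D.2.1 u v hD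
      refine ⟨h, ?_⟩
      rcases lt_or_gt_of_ne h.ne with hlt | hlt
      · left
        simpa [hlt.le, hlt] using hD
      · right
        simpa [hlt.le, hlt] using (D.2.2 u v h).1 hD
  right_inv f := by
    funext ⟨e, he⟩
    induction e with
    | _ u v =>
      have h : G.Adj u v := he
      have hs : (⟨s(v, u), h.symm⟩ : G.edgeSet) = ⟨s(u, v), h⟩ := Subtype.ext Sym2.eq_swap
      have h' := h.symm
      rcases lt_or_gt_of_ne h.ne with hlt | hlt <;>
        simp [hlt.le, hlt, hlt.not_gt, h, h', hs]

theorem card_orient [Fintype V] (G : SimpleGraph V) :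
    Nat.card G.Orient = 2 ^ G.edgeFinset.card := by
  let : LinearOrder V := LinearOrder.lift' (Fintype.equivFin V) (Fintype.equivFin V).injective
  rw [Nat.card_congr (orientEquivEdgeFun G), Nat.card_fun, Nat.card_eq_fintype_card,
    Nat.card_eq_fintype_card, Fintype.card_prop, edgeFinset_card]

/-! ### Orientations whose `k`-cliques are transitive -/

theorem freeOrient_RFam_of_cliqueFree {G : SimpleGraph V} {k : ℕ} (hG : G.CliqueFree k)
    (D : G.Orient) : FreeOrient (RFam k) D := by
  rintro m T ⟨rfl, -⟩ ⟨φ, hφ, hT⟩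
  rw [cliqueFree_iff] at hG
  refine hG.elim' ⟨⟨φ, fun {i j} h => ?_⟩, hφ⟩
  by_cases hij : T.1 i j
  · exact D.2.1 _ _ (hT _ _ hij)
  · exact (D.2.1 _ _ (hT _ _ ((T.2.2 j i h.symm).2 hij))).symm

theorem numOrient_of_cliqueFree [Fintype V] {G : SimpleGraph V} {k : ℕ} (hG : G.CliqueFree k) :
    numOrient G (RFam k) = 2 ^ G.edgeFinset.card := by
  rw [← card_orient, numOrient]
  exact Nat.card_congr (Equiv.subtypeUnivEquiv (freeOrient_RFam_of_cliqueFree hG))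

theorem FreeOrient.trans_of_isNClique {G : SimpleGraph V} {k : ℕ} {D : G.Orient}
    (hD : FreeOrient (RFam k) D) {S : Finset V} (hS : G.IsNClique k S) {a b c : V}
    (ha : a ∈ S) (hb : b ∈ S) (hc : c ∈ S) (hab : D.1 a b) (hbc : D.1 b c) : D.1 a c := by
  let e : Fin k ≃ S := (S.equivFinOfCardEq hS.card_eq).symm
  let T : (⊤ : SimpleGraph (Fin k)).Orient := ⟨fun i j => D.1 (e i) (e j), by
    refine ⟨fun i j h hij => ?_, fun i j h => D.2.2 _ _ (hS.isClique (e i).2 (e j).2 ?_)⟩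
    · exact (D.2.1 _ _ h).ne (by rw [hij])
    · exact fun hij => h (e.injective (Subtype.ext hij))⟩
  have hT : Transitive T.1 := by
    by_contra hT
    exact hD k T ⟨rfl, hT⟩
      ⟨fun i => e i, Subtype.val_injective.comp e.injective, fun i j h => h⟩
  have := @hT (e.symm ⟨a, ha⟩) (e.symm ⟨b, hb⟩) (e.symm ⟨c, hc⟩)
  simpa [T, hab, hbc] using this

/-- The restriction of an orientation to an induced subgraph. -/
def SimpleGraph.Orient.restrict {G : SimpleGraph V} (D : G.Orient) (s : Set V) :
    (G.induce s).Orient :=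
  ⟨fun u v => D.1 u v, fun _ _ h => D.2.1 _ _ h, fun _ _ h => D.2.2 _ _ h⟩

theorem FreeOrient.restrict {G : SimpleGraph V} {F : TournFamily} {D : G.Orient}
    (hD : FreeOrient F D) (s : Set V) : FreeOrient F (D.restrict s) := by
  rintro m T hT ⟨φ, hφ, h⟩
  exact hD m T hT ⟨fun i => φ i, Subtype.val_injective.comp hφ, h⟩

/-- The number of vertices of `W` that dominate `v`. -/
def inDegIn {G : SimpleGraph V} (D : G.Orient) (W : Finset V) (v : V) : ℕ :=
  (W.filter fun u => D.1 u v).card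

theorem orient_irrefl {G : SimpleGraph V} (D : G.Orient) (v : V) : ¬ D.1 v v :=
  fun h => (D.2.1 v v h).ne rfl

theorem inDegIn_lt_card {G : SimpleGraph V} (D : G.Orient) {W : Finset V} {v : V} (hv : v ∈ W) :
    inDegIn D W v < W.card :=
  card_lt_card (filter_ssubset.2 ⟨v, hv, orient_irrefl D v⟩)

theorem FreeOrient.inDegIn_lt {G : SimpleGraph V} {k : ℕ} {D : G.Orient}
    (hD : FreeOrient (RFam k) D) {W : Finset V} (hW : G.IsNClique k W) {u v : V}
    (hu : u ∈ W) (hv : v ∈ W) (h : D.1 u v) : inDegIn D W u < inDegIn D W v := by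
  refine card_lt_card ((ssubset_iff_of_subset fun w hw => ?_).2 ⟨u, ?_, ?_⟩)
  · rw [mem_filter] at hw ⊢
    exact ⟨hw.1, hD.trans_of_isNClique hW hw.1 hu hv hw.2 h⟩
  · exact mem_filter.2 ⟨hu, h⟩
  · exact fun h' => orient_irrefl D u (mem_filter.1 h').2

theorem FreeOrient.inDegIn_lt_iff {G : SimpleGraph V} {k : ℕ} {D : G.Orient}
    (hD : FreeOrient (RFam k) D) {W : Finset V} (hW : G.IsNClique k W) {u v : V}
    (hu : u ∈ W) (hv : v ∈ W) : inDegIn D W u < inDegIn D W v ↔ D.1 u v := by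
  refine ⟨fun h => ?_, hD.inDegIn_lt hW hu hv⟩
  have huv : u ≠ v := by
    rintro rfl
    exact lt_irrefl _ h
  rw [D.2.2 u v (hW.isClique hu hv huv)]
  exact fun h' => lt_asymm h (hD.inDegIn_lt hW hv hu h')

/-- The linear order induced on a `k`-clique. -/
def FreeOrient.cliqueRank {G : SimpleGraph V} {k : ℕ} {D : G.Orient}
    (hD : FreeOrient (RFam k) D) {W : Finset V} (hW : G.IsNClique k W) : W ↪ Fin k where
  toFun w := ⟨inDegIn D W w, hW.card_eq ▸ inDegIn_lt_card D w.2⟩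
  inj' u v huv := by
    by_contra hne
    have hadj := hW.isClique u.2 v.2 (fun h => hne (Subtype.ext h))
    have heq : inDegIn D W u = inDegIn D W v := congrArg Fin.val huv
    by_cases h : D.1 u v
    · exact (hD.inDegIn_lt hW u.2 v.2 h).ne heq
    · exact (hD.inDegIn_lt hW v.2 u.2 ((D.2.2 _ _ hadj.symm).2 h)).ne' heq

/-- If a vertex `v` has at least `k - 1` neighbours in a `k`-clique, then a free orientation
is transitive on `v` together with any two of these neighbours. -/
theorem FreeOrient.trans_of_neighbors {G : SimpleGraph V} {k : ℕ} (hk : 3 ≤ k) {D : G.Orient}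
    (hD : FreeOrient (RFam k) D) {W : Finset V} (hW : G.IsNClique k W) {v : V}
    (hd : k - 1 ≤ (W.filter fun w => G.Adj v w).card) {a b : V} (ha : a ∈ W) (hb : b ∈ W)
    (hva : G.Adj v a) (hvb : G.Adj v b) (hab : D.1 a b) (hbv : D.1 b v) : D.1 a v := by
  obtain ⟨S, hS, hSW, hc⟩ := exists_subsuperset_card_eq (s := {a, b})
    (t := W.filter fun w => G.Adj v w) (n := k - 1)
    (by
      intro x hx
      rw [mem_insert, mem_singleton] at hx
      rcases hx with rfl | rfl <;> simp [*])
    (card_le_two.trans (by omega)) hd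
  have hSN : ∀ w ∈ S, w ∈ W ∧ G.Adj v w := fun w hw => mem_filter.1 (hSW hw)
  have hcl : G.IsNClique (k - 1) S :=
    ⟨hW.isClique.subset fun w hw => (hSN w hw).1, hc⟩
  have hcl' := hcl.insert (a := v) fun w hw => (hSN w hw).2
  rw [Nat.sub_add_cancel (by omega)] at hcl'
  exact hD.trans_of_isNClique hcl' (mem_insert_of_mem (hS (by simp)))
    (mem_insert_of_mem (hS (by simp))) (mem_insert_self _ _) hab hbv

theorem FreeOrient.inNeighbors_subset_or {G : SimpleGraph V} {k : ℕ} (hk : 3 ≤ k)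
    {D D' : G.Orient} (hD : FreeOrient (RFam k) D) (hD' : FreeOrient (RFam k) D')
    {W : Finset V} (hW : G.IsNClique k W) {v : V}
    (hd : k - 1 ≤ (W.filter fun w => G.Adj v w).card)
    (hDD' : ∀ a ∈ W, ∀ b ∈ W, D.1 a b ↔ D'.1 a b) :
    (W.filter fun w => D.1 w v) ⊆ (W.filter fun w => D'.1 w v) ∨
      (W.filter fun w => D'.1 w v) ⊆ (W.filter fun w => D.1 w v) := by
  by_contra! h
  obtain ⟨⟨a, ha, ha'⟩, ⟨b, hb, hb'⟩⟩ := And.imp not_subset.1 not_subset.1 h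
  simp only [mem_filter, not_and] at ha ha' hb hb'
  have hva := (D.2.1 _ _ ha.2).symm
  have hvb := (D'.2.1 _ _ hb.2).symm
  have hab : a ≠ b := by
    rintro rfl
    exact ha' ha.1 hb.2
  have hadj := hW.isClique ha.1 hb.1 hab
  by_cases h : D.1 a b
  · exact ha' ha.1 (hD'.trans_of_neighbors hk hW hd ha.1 hb.1 hva hvb
      ((hDD' a ha.1 b hb.1).1 h) hb.2)
  · exact hb' hb.1 (hD.trans_of_neighbors hk hW hd hb.1 ha.1 hvb hva
      ((D.2.2 _ _ hadj.symm).2 h) ha.2)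

/-- Given the orientation of a `k`-clique `W`, the orientation of the edges between `W` and a vertex
`v` takes at most `max (2 ^ (k - 2)) (k + 1)` values. -/
theorem exists_code {G : SimpleGraph V} {k : ℕ} (hk : 3 ≤ k) {W : Finset V}
    (hW : G.IsNClique k W) (v : V) {M : ℕ} (hM : 2 ^ (k - 2) ≤ M)
    (hM' : k + 1 ≤ M) :
    ∃ f : {D : G.Orient // FreeOrient (RFam k) D} → Fin M, ∀ D D', f D = f D' →
      (∀ a ∈ W, ∀ b ∈ W, D.1.1 a b ↔ D'.1.1 a b) → ∀ w ∈ W, D.1.1 w v ↔ D'.1.1 w v := by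
  by_cases hd : k - 1 ≤ (W.filter fun w => G.Adj v w).card
  · have hlt : ∀ D : {D : G.Orient // FreeOrient (RFam k) D}, inDegIn D.1 W v < M := fun D => by
      have h1 : inDegIn D.1 W v ≤ W.card := card_filter_le _ _
      have := hW.card_eq
      omega
    refine ⟨fun D => ⟨inDegIn D.1 W v, hlt D⟩, fun D D' h hDD' w hw => ?_⟩
    have heq : inDegIn D.1 W v = inDegIn D'.1 W v := congrArg Fin.val h
    have hset : (W.filter fun w => D.1.1 w v) = (W.filter fun w => D'.1.1 w v) := by
      rcases D.2.inNeighbors_subset_or hk D'.2 hW hd hDD' with h | h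
      · exact eq_of_subset_of_card_le h heq.ge
      · exact (eq_of_subset_of_card_le h heq.le).symm
    simpa [hw] using congrArg (w ∈ ·) hset
  · set N := W.filter fun w => G.Adj v w with hN
    have hc : Fintype.card N.powerset ≤ Fintype.card (Fin M) := by
      rw [Fintype.card_coe, card_powerset, Fintype.card_fin]
      exact (Nat.pow_le_pow_right two_pos (by omega)).trans hM
    obtain ⟨g⟩ := Function.Embedding.nonempty_of_card_le hc
    have hsub : ∀ D : {D : G.Orient // FreeOrient (RFam k) D},
        (W.filter fun w => D.1.1 w v) ∈ N.powerset := fun D => by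
      rw [mem_powerset]
      exact monotone_filter_right _ fun w _ h => (D.1.2.1 _ _ h).symm
    refine ⟨fun D => g ⟨_, hsub D⟩, fun D D' h _ w hw => ?_⟩
    have hset := congrArg Subtype.val (g.injective h)
    simpa [hw] using congrArg (w ∈ ·) hset

theorem numOrient_le_of_isNClique [Fintype V] {G : SimpleGraph V} {k : ℕ} (hk : 3 ≤ k)
    {W : Finset V} (hW : G.IsNClique k W) {M : ℕ} (hM : 2 ^ (k - 2) ≤ M) (hM' : k + 1 ≤ M) :
    numOrient G (RFam k) ≤ k.factorial *
      (M ^ (Fintype.card V - k) * numOrient (G.induce {v | v ∉ W}) (RFam k)) := by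
  choose f hf using fun v : {v // v ∉ W} => exists_code hk hW v.1 hM hM'
  let F : {D : G.Orient // FreeOrient (RFam k) D} → (W ↪ Fin k) × ({v // v ∉ W} → Fin M) ×
      {D : (G.induce {v | v ∉ W}).Orient // FreeOrient (RFam k) D} := fun D =>
    (D.2.cliqueRank hW, fun v => f v D, ⟨D.1.restrict _, D.2.restrict _⟩)
  have hF : Function.Injective F := by
    intro D D' h
    have h1 : D.2.cliqueRank hW = D'.2.cliqueRank hW := congrArg Prod.fst h
    have h2 : ∀ v, f v D = f v D' := fun v => congrFun (congrArg (fun x => x.2.1) h) v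
    have h3 : D.1.restrict {v | v ∉ W} = D'.1.restrict _ := congrArg (fun x => x.2.2.1) h
    have hrank : ∀ w ∈ W, inDegIn D.1 W w = inDegIn D'.1 W w := fun w hw =>
      congrArg (fun r : W ↪ Fin k => (r ⟨w, hw⟩).val) h1
    have hWW : ∀ a ∈ W, ∀ b ∈ W, D.1.1 a b ↔ D'.1.1 a b := fun a ha b hb => by
      rw [← D.2.inDegIn_lt_iff hW ha hb, ← D'.2.inDegIn_lt_iff hW ha hb, hrank a ha, hrank b hb]
    have hWv : ∀ w ∈ W, ∀ v ∉ W, D.1.1 w v ↔ D'.1.1 w v := fun w hw v hv =>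
      hf ⟨v, hv⟩ D D' (h2 _) hWW w hw
    ext a b
    by_cases hab : G.Adj a b
    swap
    · exact iff_of_false (fun h => hab (D.1.2.1 _ _ h)) (fun h => hab (D'.1.2.1 _ _ h))
    by_cases ha : a ∈ W <;> by_cases hb : b ∈ W
    · exact hWW a ha b hb
    · exact hWv a ha b hb
    · rw [D.1.2.2 a b hab, D'.1.2.2 a b hab, hWv b hb a ha]
    · exact iff_of_eq (congrArg (fun E : (G.induce {v | v ∉ W}).Orient => E.1 ⟨a, ha⟩ ⟨b, hb⟩) h3)
  have hle := Nat.card_le_card_of_injective F hF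
  have hcard : Fintype.card {v // v ∉ W} = Fintype.card V - k := by
    rw [Fintype.card_subtype_compl, Fintype.card_coe, hW.card_eq]
  have hemb : Nat.card (W ↪ Fin k) = k.factorial := by
    rw [Nat.card_eq_fintype_card, Fintype.card_embedding_eq, Fintype.card_fin, Fintype.card_coe,
      hW.card_eq, Nat.descFactorial_self]
  rw [Nat.card_prod, Nat.card_prod, hemb, Nat.card_fun, Nat.card_eq_fintype_card (α := Fin M),
    Fintype.card_fin, Nat.card_eq_fintype_card (α := {v // v ∉ W}), hcard] at hle
  exact hle

/-! ### Turán numbers -/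

theorem turanNum_add (r n : ℕ) :
    turanNum r (n + r) = turanNum r n + n * (r - 1) + r.choose 2 := by
  have h := card_edgeFinset_turanGraph_add (n := n) (r := r)
  unfold turanNum
  convert h

theorem card_edgeFinset_le_turanNum [Fintype V] {G : SimpleGraph V} {r : ℕ} (hr : 0 < r)
    (hG : G.CliqueFree (r + 1)) : G.edgeFinset.card ≤ turanNum r (Fintype.card V) := by
  obtain ⟨J, _, hJ⟩ := exists_isTuranMaximal (V := V) hr
  obtain ⟨e⟩ := hJ.nonempty_iso_turanGraph
  have h := hJ.2 hG
  rw [e.card_edgeFinset_eq] at h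
  unfold turanNum
  convert h

theorem turanNum_le_succ (r n : ℕ) : turanNum r n ≤ turanNum r (n + 1) := by
  unfold turanNum
  have hinj : Function.Injective (Sym2.map (Fin.castSucc (n := n))) :=
    Sym2.map.injective (Fin.castSucc_injective n)
  refine card_le_card_of_injOn _ (fun e he => ?_) hinj.injOn
  induction e with
  | _ u v => simpa [turanGraph_adj] using he

theorem turanNum_three_gap (m : ℕ) :
    24 * (5 ^ m * 2 ^ turanNum 3 m) < 2 ^ turanNum 3 (m + 4) := by
  have hstep : ∀ m, turanNum 3 (m + 3) = turanNum 3 m + m * 2 + 3 := fun m => turanNum_add 3 m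
  have h0 : turanNum 3 0 = 0 := by simp [turanNum, eq_iff_true_of_subsingleton]
  have h3 := hstep 0
  have h1 : turanNum 3 1 = 0 := by
    have : turanGraph 1 3 = ⊥ := Subsingleton.elim _ _
    simp [turanNum, this]
  have h2 : turanNum 3 2 = 1 := by
    have h := card_edgeFinset_turanGraph (n := 2) (r := 3)
    norm_num at h
    unfold turanNum
    convert h
  induction m using Nat.strong_induction_on with
  | _ m ih =>
    match m with
    | 0 => simp [h0, hstep 1, h1]
    | 1 => simp [h1, hstep 2, h2]
    | 2 => simp [h2, hstep 3, h3, h0]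
    | m + 3 =>
      have h := ih m (by omega)
      rw [show m + 3 + 4 = (m + 4) + 3 by omega, hstep (m + 4), hstep m,
        show turanNum 3 (m + 4) + (m + 4) * 2 + 3 = turanNum 3 (m + 4) + (8 + (m * 2 + 3)) by ring,
        add_assoc (turanNum 3 m), pow_add 5,
        pow_add 2 (turanNum 3 m), pow_add 2 (turanNum 3 (m + 4)), pow_add 2 8]
      calc 24 * (5 ^ m * 5 ^ 3 * (2 ^ turanNum 3 m * 2 ^ (m * 2 + 3)))
          = 24 * (5 ^ m * 2 ^ turanNum 3 m) * (125 * 2 ^ (m * 2 + 3)) := by ring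
        _ < 2 ^ turanNum 3 (m + 4) * (125 * 2 ^ (m * 2 + 3)) := by gcongr
        _ ≤ 2 ^ turanNum 3 (m + 4) * (2 ^ 8 * 2 ^ (m * 2 + 3)) := by gcongr; norm_num

theorem factorial_lt_two_pow {k : ℕ} (hk : 4 ≤ k) :
    k.factorial < 2 ^ ((k - 1).choose 2 + (k - 2)) := by
  induction k, hk using Nat.le_induction with
  | base => decide
  | succ k hk ih =>
    obtain ⟨j, rfl⟩ : ∃ j, k = j + 2 := ⟨k - 2, by omega⟩
    have h1 : j + 2 + 1 ≤ 2 ^ (j + 1) := by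
      have : j + 2 < 2 ^ (j + 1) := by
        clear ih
        induction j, (show 2 ≤ j by omega) using Nat.le_induction with
        | base => decide
        | succ j hj ih => rw [pow_succ]; have := ih (by omega); omega
      omega
    have h2 : (j + 2 + 1 - 1).choose 2 + (j + 2 + 1 - 2) =
        (j + 1) + ((j + 2 - 1).choose 2 + (j + 2 - 2)) + 1 := by
      have : (j + 2).choose 2 = (j + 1).choose 1 + (j + 1).choose 2 := Nat.choose_succ_succ _ _
      rw [Nat.choose_one_right] at this
      have e1 : j + 2 + 1 - 1 = j + 2 := rfl
      have e2 : j + 2 - 1 = j + 1 := rfl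
      rw [e1, e2, this]
      omega
    rw [h2, pow_succ, pow_add, Nat.factorial_succ]
    calc (j + 2 + 1) * (j + 2).factorial ≤ 2 ^ (j + 1) * (j + 2).factorial := by gcongr
      _ < 2 ^ (j + 1) * 2 ^ ((j + 2 - 1).choose 2 + (j + 2 - 2)) := by gcongr
      _ ≤ _ := Nat.le_mul_of_pos_right _ two_pos

theorem succ_le_two_pow_sub_two {k : ℕ} (hk : 5 ≤ k) : k + 1 ≤ 2 ^ (k - 2) := by
  obtain ⟨j, rfl⟩ : ∃ j, k = j + 5 := ⟨k - 5, by omega⟩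
  have : j < 2 ^ j := Nat.lt_two_pow_self
  rw [show j + 5 - 2 = j + 3 by omega, pow_add]
  omega

theorem turanNum_gap {k : ℕ} (hk : 4 ≤ k) (m : ℕ) :
    k.factorial * (2 ^ ((k - 2) * m) * 2 ^ turanNum (k - 1) m) <
      2 ^ turanNum (k - 1) (m + k) := by
  have h1 : turanNum (k - 1) (m + k) =
      turanNum (k - 1) (m + 1) + (m + 1) * (k - 2) + (k - 1).choose 2 := by
    rw [show m + k = m + 1 + (k - 1) by omega, turanNum_add, Nat.sub_sub]
  have h2 := turanNum_le_succ (k - 1) m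
  calc k.factorial * (2 ^ ((k - 2) * m) * 2 ^ turanNum (k - 1) m)
      < 2 ^ ((k - 1).choose 2 + (k - 2)) * (2 ^ ((k - 2) * m) * 2 ^ turanNum (k - 1) m) := by
        gcongr
        exact factorial_lt_two_pow hk
    _ = 2 ^ (turanNum (k - 1) m + (m + 1) * (k - 2) + (k - 1).choose 2) := by
        rw [← pow_add, ← pow_add]
        ring_nf
    _ ≤ 2 ^ turanNum (k - 1) (m + k) := by
        rw [h1]
        exact Nat.pow_le_pow_right two_pos (by omega)

theorem exists_gap_bound {k : ℕ} (hk : 4 ≤ k) :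
    ∃ M : ℕ, 2 ^ (k - 2) ≤ M ∧ k + 1 ≤ M ∧ ∀ m,
      k.factorial * (M ^ m * 2 ^ turanNum (k - 1) m) < 2 ^ turanNum (k - 1) (m + k) := by
  rcases hk.eq_or_lt with rfl | hk5
  · exact ⟨5, by norm_num, by norm_num, turanNum_three_gap⟩
  · refine ⟨2 ^ (k - 2), le_rfl, succ_le_two_pow_sub_two hk5, fun m => ?_⟩
    rw [← pow_mul]
    exact turanNum_gap hk m

/-! ### The upper bound -/

theorem numOrient_RFam_le {k : ℕ} (hk : 4 ≤ k) (n : ℕ) (V : Type u) [Fintype V]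
    (hV : Fintype.card V = n) (G : SimpleGraph V) :
    numOrient G (RFam k) ≤ 2 ^ turanNum (k - 1) n ∧
      (¬ G.CliqueFree k → numOrient G (RFam k) < 2 ^ turanNum (k - 1) n) := by
  induction n using Nat.strong_induction_on generalizing V with
  | _ n ih =>
    by_cases hG : G.CliqueFree k
    · refine ⟨?_, fun h => absurd hG h⟩
      rw [numOrient_of_cliqueFree hG, ← hV]
      refine Nat.pow_le_pow_right two_pos (card_edgeFinset_le_turanNum (by omega) ?_)
      rwa [Nat.sub_add_cancel (by omega)]
    · suffices h : numOrient G (RFam k) < 2 ^ turanNum (k - 1) n from ⟨h.le, fun _ => h⟩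
      obtain ⟨W, hW⟩ : ∃ W, G.IsNClique k W := by simpa [CliqueFree] using hG
      obtain ⟨M, hM, hM', hgap⟩ := exists_gap_bound hk
      have hkn : k ≤ n := by
        rw [← hV, ← hW.card_eq]
        exact card_le_univ W
      have hcard : Fintype.card {v // v ∉ W} = n - k := by
        rw [Fintype.card_subtype_compl, Fintype.card_coe, hW.card_eq, hV]
      have hrec := (ih (n - k) (by omega) _ hcard (G.induce {v | v ∉ W})).1
      have hle := numOrient_le_of_isNClique (by omega) hW hM hM'
      have hlt := hgap (n - k)
      rw [Nat.sub_add_cancel hkn] at hlt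
      rw [hV] at hle
      refine hle.trans_lt (lt_of_le_of_lt ?_ hlt)
      gcongr

/-- For `n ≥ k ≥ 4` with `n ≥ 5` or `k ≥ 5`, the maximum number of orientations
of an `n`-vertex graph in which every copy of `K_k` is transitively oriented is
`2 ^ t_{k-1}(n)`, attained only by the Turán graph `T_{k-1}(n)`. -/
theorem max_RFam_free_orientations (n k : ℕ) (hk : 4 ≤ k) (hkn : k ≤ n)
    (h5 : 5 ≤ n ∨ 5 ≤ k) :
    maxOrient n (RFam k) = 2 ^ turanNum (k - 1) n ∧
    ∀ G : SimpleGraph (Fin n), numOrient G (RFam k) = 2 ^ turanNum (k - 1) n →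
      Nonempty (G ≃g SimpleGraph.turanGraph n (k - 1)) := by
  have hr : 0 < k - 1 := by omega
  have hk1 : k - 1 + 1 = k := by omega
  have hub (G : SimpleGraph (Fin n)) := numOrient_RFam_le hk n (Fin n) (Fintype.card_fin n) G
  have hT : numOrient (turanGraph n (k - 1)) (RFam k) = 2 ^ turanNum (k - 1) n := by
    have hcf := turanGraph_cliqueFree (n := n) hr
    rw [hk1] at hcf
    rw [numOrient_of_cliqueFree hcf, turanNum]
    congr!
  refine ⟨le_antisymm (csSup_le (Set.range_nonempty _) ?_) ?_, fun G hG => ?_⟩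
  · rintro _ ⟨G, rfl⟩
    exact (hub G).1
  · rw [← hT]
    exact le_csSup (Set.finite_range _).bddAbove (Set.mem_range_self _)
  · have hcf : G.CliqueFree k := by
      by_contra h
      exact ((hub G).2 h).ne hG
    rw [numOrient_of_cliqueFree hcf] at hG
    have hE := Nat.pow_right_injective le_rfl hG
    have hmax : G.IsTuranMaximal (k - 1) := by
      refine ⟨by rwa [hk1], fun H _ hH => ?_⟩
      have h := card_edgeFinset_le_turanNum hr hH
      rw [Fintype.card_fin, ← hE] at h
      convert h
    have hiso := hmax.nonempty_iso_turanGraph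
    rwa [Fintype.card_fin] at hiso
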